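/- arXiv:2403.18809 — 8 statements merged into one kernel-verified Lean document; each statement's English description precedes it below -/
import Mathlib

section
/- Let k be a strictly positive definite symmetric kernel on a set X with native space N(X), let 𝒳 = {x_1,…,x_N} ⊂ X be pairwise distinct centers, and define the extended interpolation operator S̃_𝒳 f := Σ_{j=1}^N (K_{𝒳,𝒳}^{-1} f_𝒳)_j Φ_{x_j} for bounded functions f : X → ℝ. Then ‖S̃_𝒳 f‖_{N(X)} ≤ ‖K_{𝒳,𝒳}^{-1}‖_{∞→1}^{1/2} · sup_{x∈X} |f(x)|, where ‖M‖_{∞→1} denotes the operator norm of the matrix M from (ℝ^N, ‖·‖_∞) to (ℝ^N, ‖·‖_1). In particular, S̃_𝒳 is a bounded linear operator from the bounded functions on X (with sup-norm) into V_𝒳, extending the orthogonal projection S_𝒳. -/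
open scoped RealInnerProductSpace
open Matrix

/-- `H` is a native space (RKHS) of the kernel `k` on `X`. -/
structure IsNativeSpace {X H : Type*} [NormedAddCommGroup H] [InnerProductSpace ℝ H]
    (k : X → X → ℝ) (ev : H →ₗ[ℝ] (X → ℝ)) (Φ : X → H) : Prop where
  injective : Function.Injective ev
  feature : ∀ x y : X, ev (Φ x) y = k y x
  repro : ∀ (f : H) (x : X), ev f x = ⟪f, Φ x⟫

/-- `k` is a symmetric strictly positive definite kernel. -/
def IsStrictPosDefKernel {X : Type*} (k : X → X → ℝ) : Prop :=
  (∀ x y, k x y = k y x) ∧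
  ∀ (n : ℕ) (x : Fin n → X), Function.Injective x →
    (Matrix.of fun i j : Fin n => k (x i) (x j)).PosDef

/-!
Coefficients `c = K⁻¹ v` turn the quadratic form of the Gram matrix `K` into `‖∑ cⱼ φⱼ‖² = c* v`,
so Hölder's inequality and `‖c‖₁ ≤ ‖K⁻¹‖_{∞→1} ‖v‖_∞` bound the squared norm by
`‖K⁻¹‖_{∞→1} ‖v‖_∞²`. By the reproducing property, `g` and its orthogonal projection onto the
span of the features have the same samples at the centers, and interpolation is the identity on
that span.
-/

section Interpolation

open scoped InnerProductSpace

variable {𝕜 : Type*} [RCLike 𝕜]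

section LinftyToL1

variable {m n : Type*} [Fintype m] [Fintype n]

/-- The map `v ↦ M v` from `(𝕜ⁿ, ‖·‖_∞)` to `(𝕜ᵐ, ‖·‖₁)`. Its operator norm is `‖M‖_{∞→1}`. -/
noncomputable def mulVecLinftyToL1 (M : Matrix m n 𝕜) :
    (n → 𝕜) →L[𝕜] PiLp 1 (fun _ : m => 𝕜) :=
  LinearMap.toContinuousLinearMap
    ((WithLp.linearEquiv 1 𝕜 (m → 𝕜)).symm.toLinearMap ∘ₗ M.mulVecLin)

theorem norm_mulVecLinftyToL1_apply (M : Matrix m n 𝕜) (v : n → 𝕜) :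
    ‖mulVecLinftyToL1 M v‖ = ∑ i, ‖(M *ᵥ v) i‖ :=
  PiLp.norm_eq_of_L1 _

theorem norm_mulVecLinftyToL1_eq_sSup (M : Matrix m n 𝕜) :
    ‖mulVecLinftyToL1 M‖ =
      sSup {c : ℝ | ∃ v : n → 𝕜, (∀ i, ‖v i‖ ≤ 1) ∧ c = ∑ i, ‖(M *ᵥ v) i‖} := by
  rw [← ContinuousLinearMap.sSup_unitClosedBall_eq_norm]
  congr 1
  ext c
  simp only [Set.mem_image, Metric.mem_closedBall, dist_zero_right,
    pi_norm_le_iff_of_nonneg zero_le_one, norm_mulVecLinftyToL1_apply, Set.mem_ofPred_eq,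
    eq_comm (a := c)]

theorem norm_dotProduct_le_sum_norm_mul_norm (c v : n → 𝕜) :
    ‖c ⬝ᵥ v‖ ≤ (∑ i, ‖c i‖) * ‖v‖ :=
  calc ‖c ⬝ᵥ v‖ ≤ ∑ i, ‖c i * v i‖ := norm_sum_le _ _
    _ ≤ ∑ i, ‖c i‖ * ‖v‖ := by
      gcongr with i
      grw [norm_mul, norm_le_pi_norm v i]
    _ = (∑ i, ‖c i‖) * ‖v‖ := (Finset.sum_mul ..).symm

end LinftyToL1

theorem inner_sum_smul_eq_gram_mulVec {ι E : Type*} [Fintype ι] [SeminormedAddCommGroup E]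
    [InnerProductSpace 𝕜 E] (φ : ι → E) (c : ι → 𝕜) (i : ι) :
    ⟪φ i, ∑ j, c j • φ j⟫_𝕜 = (gram 𝕜 φ *ᵥ c) i := by
  simp only [inner_sum, inner_smul_right, mulVec, dotProduct, gram_apply, mul_comm]

variable {ι E : Type*} [Fintype ι] [DecidableEq ι] [NormedAddCommGroup E] [InnerProductSpace 𝕜 E]

/-- The combination `∑ j, (K⁻¹ v) j • φ j`, where `K` is the Gram matrix of `φ`. For linearly
independent `φ` it is the element of the span of `φ` with `⟪φ i, ·⟫ = v i`, and for
`φ i = k(·, x i)` it is the kernel interpolant of the values `v` at the points `x i`. -/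
noncomputable def gramInterpolant (φ : ι → E) : (ι → 𝕜) →ₗ[𝕜] E :=
  Fintype.linearCombination 𝕜 φ ∘ₗ (gram 𝕜 φ)⁻¹.mulVecLin

theorem gramInterpolant_apply (φ : ι → E) (v : ι → 𝕜) :
    gramInterpolant φ v = ∑ j, ((gram 𝕜 φ)⁻¹ *ᵥ v) j • φ j :=
  rfl

theorem isUnit_det_gram_of_linearIndependent {φ : ι → E} (hφ : LinearIndependent 𝕜 φ) :
    IsUnit (gram 𝕜 φ).det :=
  (det_gram_ne_zero_iff_linearIndependent.mpr hφ).isUnit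

theorem inner_gramInterpolant_self {φ : ι → E} (hφ : LinearIndependent 𝕜 φ) (v : ι → 𝕜) :
    ⟪gramInterpolant φ v, gramInterpolant φ v⟫_𝕜 = star ((gram 𝕜 φ)⁻¹ *ᵥ v) ⬝ᵥ v := by
  rw [gramInterpolant_apply, ← star_dotProduct_gram_mulVec, mulVec_mulVec,
    mul_nonsing_inv _ (isUnit_det_gram_of_linearIndependent hφ), one_mulVec]

theorem norm_gramInterpolant_le {φ : ι → E} (hφ : LinearIndependent 𝕜 φ) (v : ι → 𝕜) :
    ‖gramInterpolant φ v‖ ≤ √‖mulVecLinftyToL1 (gram 𝕜 φ)⁻¹‖ * ‖v‖ := by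
  set c : ι → 𝕜 := (gram 𝕜 φ)⁻¹ *ᵥ v
  have sq_le : ‖gramInterpolant φ v‖ ^ 2 ≤ ‖mulVecLinftyToL1 (gram 𝕜 φ)⁻¹‖ * ‖v‖ ^ 2 :=
    calc ‖gramInterpolant φ v‖ ^ 2 = ‖star c ⬝ᵥ v‖ := by
          rw [← inner_gramInterpolant_self hφ, inner_self_eq_norm_sq_to_K, norm_pow,
            RCLike.norm_ofReal, abs_norm]
      _ ≤ (∑ i, ‖star c i‖) * ‖v‖ := norm_dotProduct_le_sum_norm_mul_norm _ _
      _ = ‖mulVecLinftyToL1 (gram 𝕜 φ)⁻¹ v‖ * ‖v‖ := by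
          simp only [Pi.star_apply, norm_star, norm_mulVecLinftyToL1_apply, c]
      _ ≤ ‖mulVecLinftyToL1 (gram 𝕜 φ)⁻¹‖ * ‖v‖ * ‖v‖ := by
          gcongr
          exact ContinuousLinearMap.le_opNorm _ _
      _ = ‖mulVecLinftyToL1 (gram 𝕜 φ)⁻¹‖ * ‖v‖ ^ 2 := by ring
  simpa only [Real.sqrt_mul (norm_nonneg _), Real.sqrt_sq (norm_nonneg _)] using
    Real.le_sqrt_of_sq_le sq_le

theorem gramInterpolant_inner_of_mem_span {φ : ι → E} (hφ : LinearIndependent 𝕜 φ) {s : E}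
    (hs : s ∈ Submodule.span 𝕜 (Set.range φ)) :
    gramInterpolant φ (fun i => ⟪φ i, s⟫_𝕜) = s := by
  obtain ⟨c, rfl⟩ := (Submodule.mem_span_range_iff_exists_fun 𝕜).mp hs
  simp only [inner_sum_smul_eq_gram_mulVec, gramInterpolant_apply, mulVec_mulVec,
    nonsing_inv_mul _ (isUnit_det_gram_of_linearIndependent hφ), one_mulVec]

theorem gramInterpolant_inner_eq_of_sub_mem_orthogonal {φ : ι → E} (hφ : LinearIndependent 𝕜 φ)
    {g p : E} (hp : p ∈ Submodule.span 𝕜 (Set.range φ))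
    (hgp : g - p ∈ (Submodule.span 𝕜 (Set.range φ))ᗮ) :
    gramInterpolant φ (fun i => ⟪φ i, g⟫_𝕜) = p := by
  have inner_eq (i : ι) : ⟪φ i, g⟫_𝕜 = ⟪φ i, p⟫_𝕜 := by
    rw [← sub_eq_zero, ← inner_sub_right]
    exact hgp (φ i) (Submodule.subset_span ⟨i, rfl⟩)
  simp only [inner_eq, gramInterpolant_inner_of_mem_span hφ hp]

theorem extended_interpolation_operator_bound_general {X : Type*} {Φ : X → E} {ev : E → X → 𝕜}
    (hev : ∀ g x, ev g x = ⟪Φ x, g⟫_𝕜) {𝒳 : ι → X} (hΦ : LinearIndependent 𝕜 fun i => Φ (𝒳 i))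
    {S : E → E} (hSmem : ∀ f, S f ∈ Submodule.span 𝕜 (Set.range fun i => Φ (𝒳 i)))
    (hSorth : ∀ f, ∀ v ∈ Submodule.span 𝕜 (Set.range fun i => Φ (𝒳 i)), ⟪f - S f, v⟫_𝕜 = 0) :
    (∀ f : X → 𝕜, BddAbove (Set.range fun x => ‖f x‖) →
      ‖∑ j, ((gram 𝕜 fun i => Φ (𝒳 i))⁻¹ *ᵥ fun i => f (𝒳 i)) j • Φ (𝒳 j)‖ ≤
        √(sSup {c : ℝ | ∃ v : ι → 𝕜, (∀ i, ‖v i‖ ≤ 1) ∧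
          c = ∑ i, ‖((gram 𝕜 fun i => Φ (𝒳 i))⁻¹ *ᵥ v) i‖}) * ⨆ x, ‖f x‖) ∧
    ∀ g : E, ∑ j, ((gram 𝕜 fun i => Φ (𝒳 i))⁻¹ *ᵥ fun i => ev g (𝒳 i)) j • Φ (𝒳 j) = S g := by
  simp only [← norm_mulVecLinftyToL1_eq_sSup, ← gramInterpolant_apply, hev]
  refine ⟨fun f hf => ?_, fun g => ?_⟩
  · have samples_le : ‖fun i => f (𝒳 i)‖ ≤ ⨆ x, ‖f x‖ :=
      (pi_norm_le_iff_of_nonneg (Real.iSup_nonneg fun _ => norm_nonneg _)).mpr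
        fun i => le_ciSup hf (𝒳 i)
    grw [norm_gramInterpolant_le hΦ, samples_le]
  · exact gramInterpolant_inner_eq_of_sub_mem_orthogonal hΦ (hSmem g)
      ((Submodule.mem_orthogonal' _ _).mpr (hSorth g))

end Interpolation

section NativeSpace

variable {X H : Type*} [NormedAddCommGroup H] [InnerProductSpace ℝ H] {k : X → X → ℝ}
  {ev : H →ₗ[ℝ] (X → ℝ)} {Φ : X → H}

theorem IsNativeSpace.ev_eq_inner (hN : IsNativeSpace k ev Φ) (f : H) (x : X) :
    ev f x = ⟪Φ x, f⟫ :=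
  (hN.repro f x).trans (real_inner_comm _ _)

theorem IsNativeSpace.kernel_eq_inner (hN : IsNativeSpace k ev Φ) (x y : X) :
    k x y = ⟪Φ x, Φ y⟫ :=
  (hN.feature y x).symm.trans (hN.ev_eq_inner (Φ y) x)

theorem IsNativeSpace.linearIndependent_features (hN : IsNativeSpace k ev Φ)
    (hk : IsStrictPosDefKernel k) {N : ℕ} {𝒳 : Fin N → X} (h𝒳 : Function.Injective 𝒳) :
    LinearIndependent ℝ fun i => Φ (𝒳 i) := by
  have gram_eq : (gram ℝ fun i => Φ (𝒳 i)) = Matrix.of fun i j => k (𝒳 i) (𝒳 j) :=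
    Matrix.ext fun i j => (hN.kernel_eq_inner _ _).symm
  exact linearIndependent_of_posDef_gram (gram_eq ▸ hk.2 N 𝒳 h𝒳)

end NativeSpace

/-- the extended interpolation operator
`S̃_𝒳 f = ∑ j (K⁻¹ f_𝒳)_j Φ_{x_j}` on bounded functions satisfies
`‖S̃_𝒳 f‖_{N(X)} ≤ ‖K⁻¹‖_{∞→1}^{1/2} · sup_x |f(x)|`, and it extends the orthogonal
projection `S_𝒳`. Here `‖K⁻¹‖_{∞→1}` is the operator norm from `(ℝ^N, ‖·‖_∞)` to
`(ℝ^N, ‖·‖_1)`, expressed as the supremum of `‖K⁻¹ v‖_1` over the unit ball of `‖·‖_∞`. -/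
theorem extended_interpolation_operator_bound
    {X H : Type*} [NormedAddCommGroup H] [InnerProductSpace ℝ H] [CompleteSpace H]
    (k : X → X → ℝ) (ev : H →ₗ[ℝ] (X → ℝ)) (Φ : X → H)
    (hN : IsNativeSpace k ev Φ) (hk : IsStrictPosDefKernel k)
    {N : ℕ} (𝒳 : Fin N → X) (h𝒳 : Function.Injective 𝒳)
    (V : Submodule ℝ H) (hV : V = Submodule.span ℝ (Set.range fun i => Φ (𝒳 i)))
    (K : Matrix (Fin N) (Fin N) ℝ) (hK : ∀ i j, K i j = k (𝒳 i) (𝒳 j))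
    -- `S` is the orthogonal projection of `H` onto `V`
    (S : H → H) (hSmem : ∀ f, S f ∈ V) (hSorth : ∀ f, ∀ v ∈ V, ⟪f - S f, v⟫ = (0 : ℝ)) :
    (∀ f : X → ℝ, BddAbove (Set.range fun x => |f x|) →
      ‖∑ j, (K⁻¹ *ᵥ fun i => f (𝒳 i)) j • Φ (𝒳 j)‖ ≤
        Real.sqrt (sSup {c : ℝ | ∃ v : Fin N → ℝ,
            (∀ i, |v i| ≤ 1) ∧ c = ∑ i, |(K⁻¹ *ᵥ v) i|}) * ⨆ x, |f x|) ∧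
    ∀ g : H, ∑ j, (K⁻¹ *ᵥ fun i => ev g (𝒳 i)) j • Φ (𝒳 j) = S g := by
  obtain rfl : K = gram ℝ fun i => Φ (𝒳 i) :=
    Matrix.ext fun i j => (hK i j).trans (hN.kernel_eq_inner _ _)
  subst hV
  exact extended_interpolation_operator_bound_general hN.ev_eq_inner
    (hN.linearIndependent_features hk h𝒳) hSmem hSorth
end

section
/- Let X and Y be sets, let k_X and k_Y be symmetric positive definite kernels on X and Y with native spaces N(X) and N(Y) respectively, and let A : X → Y be a map. Assume the invariance condition: for every f ∈ N(Y) the composition f ∘ A belongs to N(X). Then the Koopman operator K_A restricted to N(Y), i.e. the linear map N(Y) → N(X), f ↦ f ∘ A, is bounded: there exists C ≥ 0 such that ‖f ∘ A‖_{N(X)} ≤ C ‖f‖_{N(Y)} for all f ∈ N(Y). -/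
open scoped RealInnerProductSpace

/-- `k` is a symmetric positive definite kernel (all kernel matrices are positive
semidefinite). -/
def IsPosDefKernel {X : Type*} (k : X → X → ℝ) : Prop :=
  (∀ x y, k x y = k y x) ∧
  ∀ (n : ℕ) (x : Fin n → X) (c : Fin n → ℝ),
    0 ≤ ∑ i, ∑ j, c i * c j * k (x i) (x j)

/-!
Point evaluations are continuous on a native space, so `f ↦ f ∘ A` is continuous from `N(Y)` to the
functions on `X` with pointwise convergence. That topology is Hausdorff and `N(X)` injects into it
continuously, so the graph of `K_A` is closed in `N(Y) × N(X)` and the closed graph theorem applies.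
-/

section ClosedGraph

variable {𝕜 E F W : Type*} [NontriviallyNormedField 𝕜]
  [NormedAddCommGroup E] [NormedSpace 𝕜 E] [CompleteSpace E]
  [NormedAddCommGroup F] [NormedSpace 𝕜 F] [CompleteSpace F]
  [TopologicalSpace W] [T2Space W]

theorem continuous_of_continuous_injective_comp {j : F → W} (hj : Continuous j)
    (hj_inj : Function.Injective j) (L : E →ₗ[𝕜] F) (hL : Continuous (j ∘ L)) :
    Continuous L := by
  have graph_eq : (L.graph : Set (E × F)) = {p | j p.2 = (j ∘ L) p.1} :=
    Set.ext fun _ => hj_inj.eq_iff.symm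
  have graph_closed : IsClosed (L.graph : Set (E × F)) :=
    graph_eq ▸ isClosed_eq (hj.comp continuous_snd) (hL.comp continuous_fst)
  exact L.continuous_of_isClosed_graph graph_closed

theorem exists_continuousLinearMap_comp_eq_of_range_le [AddCommMonoid W] [Module 𝕜 W]
    {j : F →L[𝕜] W} (hj : Function.Injective j) (u : E →L[𝕜] W) (hu : u.range ≤ j.range) :
    ∃ L : E →L[𝕜] F, j ∘L L = u := by
  let e : F ≃ₗ[𝕜] j.range := LinearEquiv.ofInjective j.toLinearMap hj
  let L : E →ₗ[𝕜] F := e.symm ∘ₗ u.toLinearMap.codRestrict j.range fun f => hu ⟨f, rfl⟩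
  have hL (f : E) : j (L f) = u f := congrArg Subtype.val (e.apply_symm_apply _)
  have L_continuous : Continuous L :=
    continuous_of_continuous_injective_comp j.continuous hj L
      (u.continuous.congr fun f => (hL f).symm)
  exact ⟨⟨L, L_continuous⟩, ContinuousLinearMap.ext hL⟩

end ClosedGraph

theorem koopman_bounded_on_native_spaces_general {𝕜 X Y V BX BY : Type*}
    [NontriviallyNormedField 𝕜]
    [AddCommMonoid V] [Module 𝕜 V] [TopologicalSpace V] [T2Space V]
    [NormedAddCommGroup BX] [NormedSpace 𝕜 BX] [CompleteSpace BX]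
    [NormedAddCommGroup BY] [NormedSpace 𝕜 BY] [CompleteSpace BY]
    (evX : BX →L[𝕜] (X → V)) (evX_injective : Function.Injective evX)
    (evY : BY →L[𝕜] (Y → V)) (A : X → Y)
    (hinv : ∀ f : BY, ∃ h : BX, evX h = fun x => evY f (A x)) :
    ∃ C : ℝ, 0 ≤ C ∧
      ∀ (f : BY) (h : BX), (evX h = fun x => evY f (A x)) → ‖h‖ ≤ C * ‖f‖ := by
  let evYA : BY →L[𝕜] (X → V) := Pi.compRightL 𝕜 (fun _ => V) A ∘L evY
  have range_le : evYA.range ≤ evX.range := by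
    rintro _ ⟨f, rfl⟩
    exact hinv f
  obtain ⟨K, hK⟩ := exists_continuousLinearMap_comp_eq_of_range_le evX_injective evYA range_le
  refine ⟨‖K‖, norm_nonneg K, fun f h hfh => ?_⟩
  have h_eq : h = K f := evX_injective (hfh.trans (DFunLike.congr_fun hK f).symm)
  exact h_eq ▸ K.le_opNorm f

theorem IsNativeSpace.continuous_ev {X H : Type*} [NormedAddCommGroup H]
    [InnerProductSpace ℝ H] {k : X → X → ℝ} {ev : H →ₗ[ℝ] (X → ℝ)} {Φ : X → H}
    (hN : IsNativeSpace k ev Φ) : Continuous ev :=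
  continuous_pi fun x =>
    (continuous_id.inner continuous_const).congr fun f => (hN.repro f x).symm

/-- if the Koopman operator `f ↦ f ∘ A` maps the native space `N(Y)` into the
native space `N(X)`, then its restriction `N(Y) → N(X)` is a bounded operator. -/
theorem koopman_bounded_on_native_spaces
    {X Y HX HY : Type*}
    [NormedAddCommGroup HX] [InnerProductSpace ℝ HX] [CompleteSpace HX]
    [NormedAddCommGroup HY] [InnerProductSpace ℝ HY] [CompleteSpace HY]
    (kX : X → X → ℝ) (evX : HX →ₗ[ℝ] (X → ℝ)) (Φ : X → HX)
    (kY : Y → Y → ℝ) (evY : HY →ₗ[ℝ] (Y → ℝ)) (Ψ : Y → HY)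
    (hNX : IsNativeSpace kX evX Φ) (hNY : IsNativeSpace kY evY Ψ)
    (hkX : IsPosDefKernel kX) (hkY : IsPosDefKernel kY)
    (A : X → Y)
    -- invariance: every `f ∘ A` with `f ∈ N(Y)` belongs to `N(X)`
    (hinv : ∀ f : HY, ∃ h : HX, evX h = fun x => evY f (A x)) :
    ∃ C : ℝ, 0 ≤ C ∧
      ∀ (f : HY) (h : HX), (evX h = fun x => evY f (A x)) → ‖h‖ ≤ C * ‖f‖ :=
  koopman_bounded_on_native_spaces_general ⟨evX, hNX.continuous_ev⟩ hNX.injective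
    ⟨evY, hNY.continuous_ev⟩ A hinv
end

section
/- Let k_X and k_Y be strictly positive definite symmetric kernels on X and Y with native spaces N(X), N(Y), let A : X → Y be a map with f ∘ A ∈ N(X) for all f ∈ N(Y), let 𝒳 = {x_1,…,x_N} ⊂ X and 𝒴 = {y_1,…,y_M} ⊂ Y be sets of pairwise distinct centers, and let S_𝒳, S_𝒴 denote the orthogonal projections of N(X) onto V_𝒳 and of N(Y) onto V_𝒴, respectively. Then S_𝒳((S_𝒴 f) ∘ A) = S_𝒳(f ∘ A) holds for all f ∈ N(Y) if and only if {A(x_1),…,A(x_N)} ⊆ {y_1,…,y_M}. -/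
open scoped RealInnerProductSpace

/-!
By the reproducing property, projecting onto the span of the features at a set of centers amounts
to restricting to these centers: `S_𝒳 h₁ = S_𝒳 h₂` iff `h₁` and `h₂` agree on `𝒳`. Hence the
identity to be characterized says that `(S_𝒴 f)(A xᵢ) = f (A xᵢ)` for all `f` and `i`. For a fixed
point `y`, the functionals `f ↦ (S_𝒴 f)(y)` and `f ↦ f y` are represented by `S_𝒴 Ψ_y` and `Ψ_y`, so
they coincide iff `Ψ_y ∈ V_𝒴`; by strict positive definiteness the features are linearly
independent, and this happens only for `y ∈ 𝒴`.
-/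

section OrthogonalProjection

variable {𝕜 E : Type*} [RCLike 𝕜] [NormedAddCommGroup E] [InnerProductSpace 𝕜 E]

theorem exists_hasOrthogonalProjection_eq_starProjection {V : Submodule 𝕜 E} {S : E → E}
    (mem : ∀ f, S f ∈ V) (orth : ∀ f, ∀ v ∈ V, inner 𝕜 (f - S f) v = 0) :
    ∃ _ : V.HasOrthogonalProjection, S = V.starProjection :=
  have hV : V.HasOrthogonalProjection :=
    ⟨fun f => ⟨S f, mem f, (V.mem_orthogonal' _).2 (orth f)⟩⟩
  ⟨hV, funext fun f =>
    (Submodule.eq_starProjection_of_mem_of_inner_eq_zero (mem f) (orth f)).symm⟩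

theorem mem_orthogonal_span_range_iff {ι : Type*} {v : ι → E} {f : E} :
    f ∈ (Submodule.span 𝕜 (Set.range v))ᗮ ↔ ∀ i, inner 𝕜 f (v i) = 0 := by
  rw [← Submodule.span_singleton_le_iff_mem, ← Submodule.isOrtho_iff_le, Submodule.isOrtho_span]
  simp only [Set.mem_singleton_iff, forall_eq, Set.forall_mem_range]

theorem starProjection_span_range_eq_iff {ι : Type*} {v : ι → E}
    [(Submodule.span 𝕜 (Set.range v)).HasOrthogonalProjection] {f g : E} :
    (Submodule.span 𝕜 (Set.range v)).starProjection f =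
        (Submodule.span 𝕜 (Set.range v)).starProjection g ↔
      ∀ i, inner 𝕜 f (v i) = inner 𝕜 g (v i) := by
  rw [← sub_eq_zero, ← map_sub, Submodule.starProjection_apply_eq_zero_iff,
    mem_orthogonal_span_range_iff]
  simp only [inner_sub_left, sub_eq_zero]

theorem forall_inner_starProjection_eq_iff_mem {V : Submodule 𝕜 E} [V.HasOrthogonalProjection]
    {w : E} : (∀ f, inner 𝕜 (V.starProjection f) w = inner 𝕜 f w) ↔ w ∈ V := by
  simp only [Submodule.inner_starProjection_left_eq_right]
  rw [← Submodule.starProjection_eq_self_iff, ext_iff_inner_left 𝕜]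

end OrthogonalProjection

/-- The trial space `V_c` spanned by the features `Φ (c i)` at the centers `c i`, for a family of
centers of any cardinality. It is reducible so that results about `Submodule.span` apply to it. -/
abbrev featureSpan {X H ι : Type*} [AddCommGroup H] [Module ℝ H] (Φ : X → H) (c : ι → X) :
    Submodule ℝ H :=
  Submodule.span ℝ (Set.range fun i => Φ (c i))

namespace IsNativeSpace

variable {X H : Type*} [NormedAddCommGroup H] [InnerProductSpace ℝ H]
  {k : X → X → ℝ} {ev : H →ₗ[ℝ] (X → ℝ)} {Φ : X → H}

theorem gram_feature (hN : IsNativeSpace k ev Φ) {ι : Type*} (x : ι → X) :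
    Matrix.gram ℝ (Φ ∘ x) = Matrix.of fun i j => k (x i) (x j) := by
  ext i j
  rw [Matrix.gram_apply, Matrix.of_apply, ← hN.feature, hN.repro, real_inner_comm]
  rfl

theorem linearIndependent_feature (hN : IsNativeSpace k ev Φ) (hk : IsStrictPosDefKernel k) :
    LinearIndependent ℝ Φ := by
  rw [linearIndependent_iff_finset_linearIndependent]
  intro s
  let x : Fin s.card → X := Subtype.val ∘ s.equivFin.symm
  have x_injective : Function.Injective x :=
    Subtype.val_injective.comp s.equivFin.symm.injective
  have gram_posDef : (Matrix.gram ℝ (Φ ∘ x)).PosDef := by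
    rw [hN.gram_feature]
    exact hk.2 _ x x_injective
  exact (linearIndependent_equiv s.equivFin.symm).1
    (Matrix.linearIndependent_of_posDef_gram gram_posDef)

theorem feature_mem_featureSpan_iff (hN : IsNativeSpace k ev Φ) (hk : IsStrictPosDefKernel k)
    {ι : Type*} {c : ι → X} {x : X} :
    Φ x ∈ featureSpan Φ c ↔ x ∈ Set.range c := by
  rw [featureSpan, Set.range_comp' Φ c]
  exact ⟨fun h => by_contra fun hx => (hN.linearIndependent_feature hk).notMem_span_image hx h,
    fun hx => Submodule.subset_span (Set.mem_image_of_mem Φ hx)⟩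

theorem starProjection_eq_iff_eval_eq (hN : IsNativeSpace k ev Φ) {ι : Type*} {c : ι → X}
    [(featureSpan Φ c).HasOrthogonalProjection] {f g : H} :
    (featureSpan Φ c).starProjection f = (featureSpan Φ c).starProjection g ↔
      ∀ i, ev f (c i) = ev g (c i) := by
  simp only [hN.repro, starProjection_span_range_eq_iff]

theorem forall_eval_starProjection_eq_iff (hN : IsNativeSpace k ev Φ)
    (hk : IsStrictPosDefKernel k) {ι : Type*} {c : ι → X}
    [(featureSpan Φ c).HasOrthogonalProjection] {x : X} :
    (∀ f, ev ((featureSpan Φ c).starProjection f) x = ev f x) ↔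
      x ∈ Set.range c := by
  simp only [hN.repro, forall_inner_starProjection_eq_iff_mem, hN.feature_mem_featureSpan_iff hk]

end IsNativeSpace

theorem kEDMD_projection_equality_iff_image_subset_general
    {X Y HX HY : Type*}
    [NormedAddCommGroup HX] [InnerProductSpace ℝ HX]
    [NormedAddCommGroup HY] [InnerProductSpace ℝ HY]
    {kX : X → X → ℝ} {evX : HX →ₗ[ℝ] (X → ℝ)} {Φ : X → HX}
    {kY : Y → Y → ℝ} {evY : HY →ₗ[ℝ] (Y → ℝ)} {Ψ : Y → HY}
    (hNX : IsNativeSpace kX evX Φ) (hNY : IsNativeSpace kY evY Ψ)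
    (hkY : IsStrictPosDefKernel kY)
    (A : X → Y) (hinv : ∀ f : HY, ∃ h : HX, evX h = fun x => evY f (A x))
    {ι κ : Type*} (𝒳 : ι → X) (𝒴 : κ → Y)
    {SX : HX → HX} (hSXmem : ∀ f, SX f ∈ featureSpan Φ 𝒳)
    (hSXorth : ∀ f, ∀ v ∈ featureSpan Φ 𝒳, ⟪f - SX f, v⟫ = (0 : ℝ))
    {SY : HY → HY} (hSYmem : ∀ f, SY f ∈ featureSpan Ψ 𝒴)
    (hSYorth : ∀ f, ∀ v ∈ featureSpan Ψ 𝒴, ⟪f - SY f, v⟫ = (0 : ℝ)) :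
    (∀ (f : HY) (h₁ h₂ : HX),
        (evX h₁ = fun x => evY (SY f) (A x)) →
        (evX h₂ = fun x => evY f (A x)) →
        SX h₁ = SX h₂) ↔
      ∀ i, ∃ j, A (𝒳 i) = 𝒴 j := by
  obtain ⟨_, rfl⟩ := exists_hasOrthogonalProjection_eq_starProjection hSXmem hSXorth
  obtain ⟨_, rfl⟩ := exists_hasOrthogonalProjection_eq_starProjection hSYmem hSYorth
  have exists_center_iff (i : ι) : (∃ j, A (𝒳 i) = 𝒴 j) ↔
      ∀ f, evY ((featureSpan Ψ 𝒴).starProjection f) (A (𝒳 i)) = evY f (A (𝒳 i)) := by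
    rw [hNY.forall_eval_starProjection_eq_iff hkY]
    exact exists_congr fun _ => eq_comm
  simp only [exists_center_iff, hNX.starProjection_eq_iff_eval_eq]
  constructor
  · intro koopman_eq i f
    obtain ⟨h₁, eval_h₁⟩ := hinv ((featureSpan Ψ 𝒴).starProjection f)
    obtain ⟨h₂, eval_h₂⟩ := hinv f
    simpa only [eval_h₁, eval_h₂] using koopman_eq f h₁ h₂ eval_h₁ eval_h₂ i
  · intro eval_eq f h₁ h₂ eval_h₁ eval_h₂ i
    simpa only [eval_h₁, eval_h₂] using eval_eq i f

/-- `S_𝒳 K_A S_𝒴 = S_𝒳 K_A` on `N(Y)` if and only if `A(𝒳) ⊆ 𝒴`.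
The Koopman images `(S_𝒴 f) ∘ A` and `f ∘ A` are represented by their (unique)
preimages `h₁, h₂ ∈ N(X)` under `ev_X`. -/
theorem kEDMD_projection_equality_iff_image_subset
    {X Y HX HY : Type*}
    [NormedAddCommGroup HX] [InnerProductSpace ℝ HX] [CompleteSpace HX]
    [NormedAddCommGroup HY] [InnerProductSpace ℝ HY] [CompleteSpace HY]
    (kX : X → X → ℝ) (evX : HX →ₗ[ℝ] (X → ℝ)) (Φ : X → HX)
    (kY : Y → Y → ℝ) (evY : HY →ₗ[ℝ] (Y → ℝ)) (Ψ : Y → HY)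
    (hNX : IsNativeSpace kX evX Φ) (hNY : IsNativeSpace kY evY Ψ)
    (hkX : IsStrictPosDefKernel kX) (hkY : IsStrictPosDefKernel kY)
    (A : X → Y)
    -- invariance: every `f ∘ A` with `f ∈ N(Y)` belongs to `N(X)`
    (hinv : ∀ f : HY, ∃ h : HX, evX h = fun x => evY f (A x))
    {N M : ℕ} (𝒳 : Fin N → X) (h𝒳 : Function.Injective 𝒳)
    (𝒴 : Fin M → Y) (h𝒴 : Function.Injective 𝒴)
    (VX : Submodule ℝ HX) (hVX : VX = Submodule.span ℝ (Set.range fun i => Φ (𝒳 i)))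
    (VY : Submodule ℝ HY) (hVY : VY = Submodule.span ℝ (Set.range fun j => Ψ (𝒴 j)))
    -- `SX`, `SY` are the orthogonal projections onto `VX`, `VY`
    (SX : HX → HX) (hSXmem : ∀ f, SX f ∈ VX)
    (hSXorth : ∀ f, ∀ v ∈ VX, ⟪f - SX f, v⟫ = (0 : ℝ))
    (SY : HY → HY) (hSYmem : ∀ f, SY f ∈ VY)
    (hSYorth : ∀ f, ∀ v ∈ VY, ⟪f - SY f, v⟫ = (0 : ℝ)) :
    (∀ (f : HY) (h₁ h₂ : HX),
        (evX h₁ = fun x => evY (SY f) (A x)) →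
        (evX h₂ = fun x => evY f (A x)) →
        SX h₁ = SX h₂) ↔
      ∀ i, ∃ j, A (𝒳 i) = 𝒴 j := by
  subst hVX hVY
  exact kEDMD_projection_equality_iff_image_subset_general hNX hNY hkY A hinv 𝒳 𝒴
    hSXmem hSXorth hSYmem hSYorth
end

section
/- Let k_X and k_Y be bounded strictly positive definite symmetric kernels on X and Y with native spaces N(X), N(Y), let A : X → Y be a map, let 𝒳 ⊂ X and 𝒴 ⊂ Y be sets of pairwise distinct centers with orthogonal projections S_𝒳 : N(X) → V_𝒳 and S_𝒴 : N(Y) → V_𝒴. Assume g ∘ A ∈ N(X) for every g ∈ V_𝒴, that C_S ≥ 0 satisfies sup_{x∈X} |g(x) − (S_𝒳 g)(x)| ≤ C_S ‖g‖_{N(X)} for all g ∈ N(X), and that C_K ≥ 0 satisfies ‖g ∘ A‖_{N(X)} ≤ C_K ‖g‖_{N(Y)} for all g ∈ V_𝒴. Then for every f ∈ N(Y) the approximant K̂_A^𝒴 f := S_𝒳((S_𝒴 f) ∘ A) satisfies sup_{x∈X} |f(A(x)) − (K̂_A^𝒴 f)(x)| ≤ sup_{y∈Y} |f(y) − (S_𝒴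 f)(y)| + C_S · C_K · ‖S_𝒴 f‖_{N(Y)}. -/
open scoped RealInnerProductSpace

namespace IsNativeSpace

variable {X H : Type*} [NormedAddCommGroup H] [InnerProductSpace ℝ H]
  {k : X → X → ℝ} {ev : H →ₗ[ℝ] (X → ℝ)} {Φ : X → H}

theorem norm_feature (hN : IsNativeSpace k ev Φ) (x : X) : ‖Φ x‖ = √(k x x) := by
  rw [← hN.feature, hN.repro, norm_eq_sqrt_real_inner]

theorem abs_eval_le (hN : IsNativeSpace k ev Φ) (f : H) (x : X) :
    |ev f x| ≤ ‖f‖ * √(k x x) := by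
  rw [hN.repro, ← hN.norm_feature]
  exact abs_real_inner_le_norm f (Φ x)

theorem bddAbove_range_abs_eval (hN : IsNativeSpace k ev Φ)
    (hk : BddAbove (Set.range fun x => k x x)) (f : H) :
    BddAbove (Set.range fun x => |ev f x|) := by
  obtain ⟨C, hC⟩ := hk
  refine ⟨‖f‖ * √C, Set.forall_mem_range.2 fun x => ?_⟩
  calc |ev f x| ≤ ‖f‖ * √(k x x) := hN.abs_eval_le f x
    _ ≤ ‖f‖ * √C := by gcongr; exact hC ⟨x, rfl⟩

theorem abs_eval_sub_eval_le_iSup (hN : IsNativeSpace k ev Φ)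
    (hk : BddAbove (Set.range fun x => k x x)) (f g : H) (x : X) :
    |ev f x - ev g x| ≤ ⨆ y, |ev f y - ev g y| := by
  -- Finiteness has to be established first: over `ℝ` an unbounded supremum is `0`.
  have hbdd : BddAbove (Set.range fun y => |ev f y - ev g y|) := by
    simpa only [map_sub, Pi.sub_apply] using hN.bddAbove_range_abs_eval hk (f - g)
  exact le_ciSup hbdd x

end IsNativeSpace

theorem kEDMD_two_projections_uniform_error_bound_general
    {X Y HX HY : Type*} [Norm HX] [NormedAddCommGroup HY] [InnerProductSpace ℝ HY]
    (evX : HX → X → ℝ) {kY : Y → Y → ℝ} {evY : HY →ₗ[ℝ] (Y → ℝ)} {Ψ : Y → HY}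
    (hNY : IsNativeSpace kY evY Ψ) (hkY : BddAbove (Set.range fun y => kY y y))
    (A : X → Y) {VY : Set HY} (SX : HX → HX) {SY : HY → HY} (hSYmem : ∀ f, SY f ∈ VY)
    {CS : ℝ} (hCS : 0 ≤ CS)
    (hCSbound : ∀ (g : HX) (x : X), |evX g x - evX (SX g) x| ≤ CS * ‖g‖)
    {CK : ℝ}
    (hCKbound : ∀ g ∈ VY, ∀ h : HX, (evX h = fun x => evY g (A x)) → ‖h‖ ≤ CK * ‖g‖)
    (f : HY) (h : HX) (hh : evX h = fun x => evY (SY f) (A x)) (x : X) :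
    |evY f (A x) - evX (SX h) x| ≤
      (⨆ y : Y, |evY f y - evY (SY f) y|) + CS * CK * ‖SY f‖ := by
  have projection_error_Y : |evY f (A x) - evY (SY f) (A x)| ≤
      ⨆ y : Y, |evY f y - evY (SY f) y| :=
    hNY.abs_eval_sub_eval_le_iSup hkY f (SY f) (A x)
  have projection_error_X : |evY (SY f) (A x) - evX (SX h) x| ≤ CS * CK * ‖SY f‖ :=
    calc |evY (SY f) (A x) - evX (SX h) x|
        = |evX h x - evX (SX h) x| := by rw [hh]
      _ ≤ CS * ‖h‖ := hCSbound h x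
      _ ≤ CS * (CK * ‖SY f‖) := by gcongr; exact hCKbound (SY f) (hSYmem f) h hh
      _ = CS * CK * ‖SY f‖ := (mul_assoc _ _ _).symm
  exact (abs_sub_le _ (evY (SY f) (A x)) _).trans
    (add_le_add projection_error_Y projection_error_X)

/-- uniform error bound for the approximant `K̂_A^𝒴 f = S_𝒳((S_𝒴 f) ∘ A)`:
`sup_x |f(A(x)) − (K̂_A^𝒴 f)(x)| ≤ sup_y |f(y) − (S_𝒴 f)(y)| + C_S · C_K · ‖S_𝒴 f‖`.
Here `h` denotes the (unique) element of `N(X)` with `ev_X h = (S_𝒴 f) ∘ A`. -/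
theorem kEDMD_two_projections_uniform_error_bound
    {X Y HX HY : Type*}
    [NormedAddCommGroup HX] [InnerProductSpace ℝ HX] [CompleteSpace HX]
    [NormedAddCommGroup HY] [InnerProductSpace ℝ HY] [CompleteSpace HY]
    (kX : X → X → ℝ) (evX : HX →ₗ[ℝ] (X → ℝ)) (Φ : X → HX)
    (kY : Y → Y → ℝ) (evY : HY →ₗ[ℝ] (Y → ℝ)) (Ψ : Y → HY)
    (hNX : IsNativeSpace kX evX Φ) (hNY : IsNativeSpace kY evY Ψ)
    (hkX : IsStrictPosDefKernel kX) (hkY : IsStrictPosDefKernel kY)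
    -- the kernels are bounded
    (hkXb : ∃ C, ∀ x x', |kX x x'| ≤ C) (hkYb : ∃ C, ∀ y y', |kY y y'| ≤ C)
    (A : X → Y)
    {N M : ℕ} (𝒳 : Fin N → X) (h𝒳 : Function.Injective 𝒳)
    (𝒴 : Fin M → Y) (h𝒴 : Function.Injective 𝒴)
    (VX : Submodule ℝ HX) (hVX : VX = Submodule.span ℝ (Set.range fun i => Φ (𝒳 i)))
    (VY : Submodule ℝ HY) (hVY : VY = Submodule.span ℝ (Set.range fun j => Ψ (𝒴 j)))
    -- every `g ∘ A` with `g ∈ V_𝒴` belongs to `N(X)`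
    (hinv : ∀ g ∈ VY, ∃ h : HX, evX h = fun x => evY g (A x))
    -- `SX`, `SY` are the orthogonal projections onto `VX`, `VY`
    (SX : HX → HX) (hSXmem : ∀ f, SX f ∈ VX)
    (hSXorth : ∀ f, ∀ v ∈ VX, ⟪f - SX f, v⟫ = (0 : ℝ))
    (SY : HY → HY) (hSYmem : ∀ f, SY f ∈ VY)
    (hSYorth : ∀ f, ∀ v ∈ VY, ⟪f - SY f, v⟫ = (0 : ℝ))
    (CS : ℝ) (hCS : 0 ≤ CS)
    (hCSbound : ∀ (g : HX) (x : X), |evX g x - evX (SX g) x| ≤ CS * ‖g‖)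
    (CK : ℝ) (hCK : 0 ≤ CK)
    (hCKbound : ∀ g ∈ VY, ∀ h : HX, (evX h = fun x => evY g (A x)) → ‖h‖ ≤ CK * ‖g‖) :
    ∀ (f : HY) (h : HX), (evX h = fun x => evY (SY f) (A x)) →
      ∀ x : X, |evY f (A x) - evX (SX h) x| ≤
        (⨆ y : Y, |evY f y - evY (SY f) y|) + CS * CK * ‖SY f‖ :=
  kEDMD_two_projections_uniform_error_bound_general evX hNY
    (hkYb.imp fun _ hC => Set.forall_mem_range.2 fun y => (le_abs_self _).trans (hC y y))
    A SX hSYmem hCS hCSbound hCKbound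
end

section
/- Let k be a strictly positive definite symmetric kernel on a set X with native space N(X), A : X → X a map, 𝒳 = {x_1,…,x_N} ⊂ X pairwise distinct centers, and define K̂_A g := S̃_𝒳(g ∘ A) for bounded g : X → ℝ. Then for every n ≥ 1 and every bounded f : X → ℝ, the n-fold iterate satisfies K̂_A^n f = Σ_{j=1}^N ((K_{𝒳,𝒳}^{-1} K_{A(𝒳),𝒳})^{n-1} K_{𝒳,𝒳}^{-1} (f∘A)_𝒳)_j Φ_{x_j}, where (K_{A(𝒳),𝒳})_{ij} := k(A(x_i), x_j) and (f∘A)_𝒳 := (f(A(x_1)),…,f(A(x_N)))^T. -/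
open scoped RealInnerProductSpace
open Matrix

/-! The operator factors as `E ∘ L`, where `L` samples `g ∘ A` at the centers and turns the samples
into coefficients, and `E` expands coefficients in the features. Regrouping,
`(E ∘ L)^(n+1) = E ∘ (L ∘ E)^n ∘ L`, so all but the outermost factors act on the finite-dimensional
coefficient space, where `L ∘ E` is multiplication by `K_{𝒳,𝒳}⁻¹ K_{A(𝒳),𝒳}`. -/

theorem comp_iterate_succ {α β : Type*} (e : α → β) (l : β → α) (n : ℕ) :
    (e ∘ l)^[n + 1] = e ∘ (l ∘ e)^[n] ∘ l := by
  have semiconj : Function.Semiconj e (l ∘ e) (e ∘ l) := fun _ => rfl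
  rw [Function.iterate_succ, ← Function.comp_assoc, ← Function.comp_assoc,
    (semiconj.iterate_right n).comp_eq]

section Coefficients

variable {R ι : Type*} [Fintype ι]

theorem iterate_mulVec [Semiring R] [DecidableEq ι] (T : Matrix ι ι R) (n : ℕ) :
    (T *ᵥ ·)^[n] = (T ^ n *ᵥ ·) := by
  induction n with
  | zero => funext c; simp
  | succ n ih => funext c; rw [Function.iterate_succ_apply', ih, mulVec_mulVec, pow_succ']

variable [CommSemiring R] {X H κ : Type*} [AddCommMonoid H] [Module R H]

theorem sample_sum_smul_eq_mulVec (ev : H →ₗ[R] (X → R)) (v : ι → H) (y : κ → X)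
    {G : Matrix κ ι R} (hG : ∀ i j, G i j = ev (v j) (y i)) (c : ι → R) :
    (fun i => ev (∑ j, c j • v j) (y i)) = G *ᵥ c := by
  funext i
  simp [mulVec, dotProduct, hG, mul_comm]

/-- `M` is an arbitrary rule from samples to coefficients: besides `K_{𝒳,𝒳}⁻¹` it may be a
regularized inverse, or a pseudoinverse when there are more samples than features. -/
theorem kEDMD_multistep_matrix_formula_general [Fintype κ] [DecidableEq ι]
    (ev : H →ₗ[R] (X → R)) (v : ι → H) (A : X → X) (𝒳 : κ → X) (M : Matrix ι κ R)
    (KA : Matrix κ ι R) (hKA : ∀ i j, KA i j = ev (v j) (A (𝒳 i))) (n : ℕ) (f : X → R) :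
    (fun g : X → R => ev (∑ j, (M *ᵥ fun i => g (A (𝒳 i))) j • v j))^[n + 1] f =
      ev (∑ j, (((M * KA) ^ n * M) *ᵥ fun i => f (A (𝒳 i))) j • v j) := by
  let expand (c : ι → R) : X → R := ev (∑ j, c j • v j)
  let fit (g : X → R) : ι → R := M *ᵥ fun i => g (A (𝒳 i))
  have fit_comp_expand : fit ∘ expand = ((M * KA) *ᵥ ·) := by
    funext c
    calc M *ᵥ (fun i => expand c (A (𝒳 i)))
        = M *ᵥ (KA *ᵥ c) := by rw [sample_sum_smul_eq_mulVec ev v (fun i => A (𝒳 i)) hKA]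
      _ = (M * KA) *ᵥ c := mulVec_mulVec c M KA
  calc (expand ∘ fit)^[n + 1] f
      = expand ((fit ∘ expand)^[n] (fit f)) := by rw [comp_iterate_succ]; rfl
    _ = expand ((M * KA) ^ n *ᵥ fit f) := by rw [fit_comp_expand, iterate_mulVec]
    _ = expand (((M * KA) ^ n * M) *ᵥ fun i => f (A (𝒳 i))) := by rw [mulVec_mulVec]

end Coefficients

/-- the `n`-fold iterate of the kEDMD operator `K̂_A g = S̃_𝒳(g ∘ A)`
on bounded functions satisfies
`K̂_A^n f = ∑ j ((K_{𝒳,𝒳}⁻¹ K_{A(𝒳),𝒳})^{n-1} K_{𝒳,𝒳}⁻¹ (f∘A)_𝒳)_j Φ_{x_j}`. -/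
theorem kEDMD_multistep_matrix_formula
    {X H : Type*} [NormedAddCommGroup H] [InnerProductSpace ℝ H] [CompleteSpace H]
    (k : X → X → ℝ) (ev : H →ₗ[ℝ] (X → ℝ)) (Φ : X → H)
    (hN : IsNativeSpace k ev Φ) (hk : IsStrictPosDefKernel k)
    -- the kernel is bounded
    (hkb : ∃ C, ∀ x x', |k x x'| ≤ C)
    (A : X → X)
    {N : ℕ} (𝒳 : Fin N → X) (h𝒳 : Function.Injective 𝒳)
    (K : Matrix (Fin N) (Fin N) ℝ) (hK : ∀ i j, K i j = k (𝒳 i) (𝒳 j))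
    (KA : Matrix (Fin N) (Fin N) ℝ) (hKA : ∀ i j, KA i j = k (A (𝒳 i)) (𝒳 j)) :
    ∀ n : ℕ, 1 ≤ n → ∀ f : X → ℝ, (∃ B, ∀ x, |f x| ≤ B) →
      (fun g : X → ℝ =>
          ev (∑ j, (K⁻¹ *ᵥ fun i => g (A (𝒳 i))) j • Φ (𝒳 j)))^[n] f =
        ev (∑ j, (((K⁻¹ * KA) ^ (n - 1) * K⁻¹) *ᵥ fun i => f (A (𝒳 i))) j
              • Φ (𝒳 j)) := by
  rintro _ hn f -
  obtain ⟨m, rfl⟩ := Nat.exists_eq_add_of_le' hn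
  exact kEDMD_multistep_matrix_formula_general ev (Φ ∘ 𝒳) A 𝒳 K⁻¹ KA
    (fun i j => (hKA i j).trans (hN.feature _ _).symm) m f
end

section
/- Let k be a bounded strictly positive definite symmetric kernel on a set X with native space N(X), let A : X → X be a map with f ∘ A ∈ N(X) for all f ∈ N(X), let 𝒳 ⊂ X be pairwise distinct centers with orthogonal projection S_𝒳 : N(X) → V_𝒳. Suppose C_S ≥ 0 satisfies sup_{x∈X} |g(x) − (S_𝒳 g)(x)| ≤ C_S ‖g‖_{N(X)} for all g ∈ N(X), and C_K ≥ 0 satisfies ‖f ∘ A‖_{N(X)} ≤ C_K ‖f‖_{N(X)} for all f ∈ N(X). Then for every n ≥ 1 and every f ∈ N(X), the n-step kEDMD prediction K̂_A^n f, where K̂_A f := S_𝒳(f ∘ A), satisfies sup_{x∈X} |(f ∘ A^{∘n})(x) − (K̂_A^n f)(x)| ≤ C_S · (Σ_{i=1}^n C_K^i) · ‖f‖_{N(X)}, where A^{∘n} denotes the n-fold composition of A. -/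
open scoped RealInnerProductSpace

/-!
Write `P = S ∘ T`. The `n`-step error telescopes along the orbit of `A` into the one-step errors of
`P^[i] f` for `i < n`, because evaluating a uniform bound at `A x` instead of `x` costs nothing.
The one-step error of `g` is the projection error of `T g`, which is at most `CS * CK * ‖g‖`, and
`‖P^[i] f‖ ≤ CK ^ i * ‖f‖` because `S` does not increase the norm.
-/

theorem norm_le_norm_of_inner_sub_eq_zero {𝕜 E : Type*} [RCLike 𝕜] [SeminormedAddCommGroup E]
    [InnerProductSpace 𝕜 E] {f p : E} (h : inner 𝕜 (f - p) p = 0) : ‖p‖ ≤ ‖f‖ := by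
  have pythagoras := norm_add_sq_eq_norm_sq_add_norm_sq_of_inner_eq_zero (f - p) p h
  rw [sub_add_cancel] at pythagoras
  refine nonneg_le_nonneg_of_sq_le_sq (norm_nonneg f) ?_
  linarith [mul_self_nonneg ‖f - p‖]

theorem norm_iterate_le_pow_mul {E : Type*} [Norm E] {P : E → E} {C : ℝ} (hC : 0 ≤ C)
    (hP : ∀ f, ‖P f‖ ≤ C * ‖f‖) (n : ℕ) (f : E) : ‖P^[n] f‖ ≤ C ^ n * ‖f‖ :=
  le_geom (u := fun i => ‖P^[i] f‖) hC n fun i _ => by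
    simpa only [Function.iterate_succ_apply'] using hP (P^[i] f)

theorem dist_iterate_le_sum_of_dist_le {X E Y : Type*} [PseudoMetricSpace Y] {ev : E → X → Y}
    {A : X → X} {P : E → E} {ε : E → ℝ} (h : ∀ f x, dist (ev f (A x)) (ev (P f) x) ≤ ε f)
    (n : ℕ) (f : E) (x : X) :
    dist (ev f (A^[n] x)) (ev (P^[n] f) x) ≤ ∑ i ∈ Finset.range n, ε (P^[i] f) := by
  induction n generalizing x with
  | zero => simp
  | succ n ih =>
    rw [Function.iterate_succ_apply, Function.iterate_succ_apply', Finset.sum_range_succ]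
    exact (dist_triangle _ (ev (P^[n] f) (A x)) _).trans (add_le_add (ih (A x)) (h _ x))

theorem sum_Icc_one_pow_eq_mul_sum_range {R : Type*} [Semiring R] (c : R) (n : ℕ) :
    ∑ i ∈ Finset.Icc 1 n, c ^ i = c * ∑ i ∈ Finset.range n, c ^ i := by
  simp only [← Finset.Ico_add_one_right_eq_Icc, Finset.sum_Ico_eq_sum_range, add_tsub_cancel_right,
    add_comm 1, pow_succ', Finset.mul_sum]

theorem kEDMD_multistep_uniform_error_bound_general {X E Y : Type*} [Norm E]
    [PseudoMetricSpace Y] {ev : E → X → Y} {A : X → X} {T S : E → E} {CS CK : ℝ}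
    (hT : ∀ f x, ev (T f) x = ev f (A x)) (hS : ∀ g, ‖S g‖ ≤ ‖g‖)
    (hCS : 0 ≤ CS) (hCSbound : ∀ g x, dist (ev g x) (ev (S g) x) ≤ CS * ‖g‖)
    (hCK : 0 ≤ CK) (hCKbound : ∀ f, ‖T f‖ ≤ CK * ‖f‖) (n : ℕ) (f : E) (x : X) :
    dist (ev f (A^[n] x)) (ev ((S ∘ T)^[n] f) x) ≤
      CS * (∑ i ∈ Finset.Icc 1 n, CK ^ i) * ‖f‖ := by
  have one_step (g : E) (y : X) :
      dist (ev g (A y)) (ev ((S ∘ T) g) y) ≤ CS * (CK * ‖g‖) := by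
    rw [← hT]
    exact (hCSbound (T g) y).trans (mul_le_mul_of_nonneg_left (hCKbound g) hCS)
  have norm_iterate (i : ℕ) : ‖(S ∘ T)^[i] f‖ ≤ CK ^ i * ‖f‖ :=
    norm_iterate_le_pow_mul hCK (fun g => (hS (T g)).trans (hCKbound g)) i f
  calc dist (ev f (A^[n] x)) (ev ((S ∘ T)^[n] f) x)
    _ ≤ ∑ i ∈ Finset.range n, CS * (CK * ‖(S ∘ T)^[i] f‖) :=
        dist_iterate_le_sum_of_dist_le one_step n f x
    _ ≤ ∑ i ∈ Finset.range n, CS * (CK * (CK ^ i * ‖f‖)) := by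
        gcongr with i
        exact norm_iterate i
    _ = CS * (∑ i ∈ Finset.Icc 1 n, CK ^ i) * ‖f‖ := by
        rw [sum_Icc_one_pow_eq_mul_sum_range]
        simp only [← Finset.mul_sum, ← Finset.sum_mul, mul_assoc]

/-- multi-step uniform error bound for the kEDMD prediction
`K̂_A^n f` with `K̂_A = S_𝒳 ∘ K_A`:
`sup_x |f(A^{∘n}(x)) − (K̂_A^n f)(x)| ≤ C_S (∑_{i=1}^n C_K^i) ‖f‖`.
Here `T : N(X) → N(X)` is the Koopman operator, i.e. `ev (T f) = (ev f) ∘ A`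
(its totality encodes the invariance `f ∘ A ∈ N(X)` for all `f ∈ N(X)`). -/
theorem kEDMD_multistep_uniform_error_bound
    {X H : Type*} [NormedAddCommGroup H] [InnerProductSpace ℝ H] [CompleteSpace H]
    (k : X → X → ℝ) (ev : H →ₗ[ℝ] (X → ℝ)) (Φ : X → H)
    (hN : IsNativeSpace k ev Φ) (hk : IsStrictPosDefKernel k)
    -- the kernel is bounded
    (hkb : ∃ C, ∀ x x', |k x x'| ≤ C)
    (A : X → X)
    -- the Koopman operator on the native space
    (T : H → H) (hT : ∀ (f : H) (x : X), ev (T f) x = ev f (A x))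
    {N : ℕ} (𝒳 : Fin N → X) (h𝒳 : Function.Injective 𝒳)
    (V : Submodule ℝ H) (hV : V = Submodule.span ℝ (Set.range fun i => Φ (𝒳 i)))
    -- `S` is the orthogonal projection onto `V`
    (S : H → H) (hSmem : ∀ f, S f ∈ V)
    (hSorth : ∀ f, ∀ v ∈ V, ⟪f - S f, v⟫ = (0 : ℝ))
    (CS : ℝ) (hCS : 0 ≤ CS)
    (hCSbound : ∀ (g : H) (x : X), |ev g x - ev (S g) x| ≤ CS * ‖g‖)
    (CK : ℝ) (hCK : 0 ≤ CK)
    (hCKbound : ∀ f : H, ‖T f‖ ≤ CK * ‖f‖) :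
    ∀ n : ℕ, 1 ≤ n → ∀ (f : H) (x : X),
      |ev f (A^[n] x) - ev ((S ∘ T)^[n] f) x| ≤
        CS * (∑ i ∈ Finset.Icc 1 n, CK ^ i) * ‖f‖ := by
  have hS (g : H) : ‖S g‖ ≤ ‖g‖ := norm_le_norm_of_inner_sub_eq_zero (hSorth g (S g) (hSmem g))
  exact fun n _ => kEDMD_multistep_uniform_error_bound_general hT hS hCS hCSbound hCK hCKbound n
end

section
/- Let k be a bounded strictly positive definite symmetric kernel on a set X with native space N(X), let A : X → X be a map with f ∘ A ∈ N(X) for all f ∈ N(X), let 𝒳 ⊂ X be pairwise distinct centers with orthogonal projection S_𝒳 : N(X) → V_𝒳. Suppose C_S ≥ 0 satisfies sup_{x∈X} |g(x) − (S_𝒳 g)(x)| ≤ C_S ‖g‖_{N(X)} for all g ∈ N(X), and C_K ≥ 0 satisfies ‖f ∘ A‖_{N(X)} ≤ C_K ‖f‖_{N(X)} for all f ∈ N(X). Then for every n ≥ 1 and every f ∈ N(X), the n-fold iterate of the approximant K̂_A^𝒳 f := S_𝒳((S_𝒳 f) ∘ A) satisfies sup_{x∈X} |(f ∘ A^{∘n})(x)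 − ((K̂_A^𝒳)^n f)(x)| ≤ C_S · (Σ_{i=0}^n C_K^i) · ‖f‖_{N(X)}, where A^{∘n} denotes the n-fold composition of A. -/
open scoped RealInnerProductSpace

/-!
Idempotence of `S` gives `(S T S)^n = (S T)^n S` for `n ≥ 1`. Replacing `f` by `S f` costs
`CS * ‖f‖`. In `(S T)^n`, the `i`-th factor is applied to a function of norm at most
`CK ^ (i - 1) * ‖f‖` and so commits an error of at most `CS * CK ^ i * ‖f‖`; composing with powers
of `A` does not increase the supremum of this error, so the errors simply add up.
-/

theorem iterate_succ_sandwich_of_idempotent {α : Type*} {S : α → α} (T : α → α)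
    (hS : ∀ a, S (S a) = S a) (n : ℕ) (a : α) :
    (fun b => S (T (S b)))^[n + 1] a = (fun b => S (T b))^[n + 1] (S a) := by
  have hsemiconj : Function.Semiconj S (fun b => S (T (S b))) (fun b => S (T b)) :=
    fun b => hS (T (S b))
  rw [Function.iterate_succ_apply', Function.iterate_succ_apply', hsemiconj.iterate_right n a]

theorem exists_eq_starProjection_of_mem_of_inner_eq_zero {𝕜 E : Type*} [RCLike 𝕜]
    [NormedAddCommGroup E] [InnerProductSpace 𝕜 E] {V : Submodule 𝕜 E} {S : E → E}
    (hmem : ∀ f, S f ∈ V) (horth : ∀ f, ∀ v ∈ V, inner 𝕜 (f - S f) v = 0) :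
    ∃ _ : V.HasOrthogonalProjection, S = V.starProjection := by
  have hV : V.HasOrthogonalProjection :=
    ⟨fun f => ⟨S f, hmem f, (V.mem_orthogonal' _).2 (horth f)⟩⟩
  exact ⟨hV, funext fun f =>
    (Submodule.eq_starProjection_of_mem_of_inner_eq_zero (hmem f) (horth f)).symm⟩

section KoopmanIterates

variable {X Y H : Type*} [PseudoMetricSpace Y] [Norm H] {ev : H → X → Y} {A : X → X}

theorem dist_iterate_le_geom_sum_mul_norm {L : H → H} {ε C : ℝ} (hε : 0 ≤ ε) (hC : 0 ≤ C)
    (hstep : ∀ f x, dist (ev f (A x)) (ev (L f) x) ≤ ε * ‖f‖) (hL : ∀ f, ‖L f‖ ≤ C * ‖f‖)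
    (n : ℕ) (f : H) (x : X) :
    dist (ev f (A^[n] x)) (ev (L^[n] f) x) ≤ ε * (∑ i ∈ Finset.range n, C ^ i) * ‖f‖ := by
  induction n generalizing f with
  | zero => simp
  | succ n ih =>
    rw [Function.iterate_succ_apply', Function.iterate_succ_apply]
    calc dist (ev f (A (A^[n] x))) (ev (L^[n] (L f)) x)
        ≤ dist (ev f (A (A^[n] x))) (ev (L f) (A^[n] x))
          + dist (ev (L f) (A^[n] x)) (ev (L^[n] (L f)) x) := dist_triangle _ _ _
      _ ≤ ε * ‖f‖ + ε * (∑ i ∈ Finset.range n, C ^ i) * ‖L f‖ :=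
          add_le_add (hstep f _) (ih (L f))
      _ ≤ ε * ‖f‖ + ε * (∑ i ∈ Finset.range n, C ^ i) * (C * ‖f‖) := by
          gcongr
          exact hL f
      _ = ε * (∑ i ∈ Finset.range (n + 1), C ^ i) * ‖f‖ := by
          rw [geom_sum_succ]
          ring

variable {T S : H → H} {CS CK : ℝ}

theorem dist_iterate_comp_le_geom_sum_mul_norm (hT : ∀ f x, ev (T f) x = ev f (A x))
    (hSnorm : ∀ f, ‖S f‖ ≤ ‖f‖) (hCS : 0 ≤ CS)
    (hS : ∀ g x, dist (ev g x) (ev (S g) x) ≤ CS * ‖g‖) (hCK : 0 ≤ CK)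
    (hTnorm : ∀ f, ‖T f‖ ≤ CK * ‖f‖) (n : ℕ) (f : H) (x : X) :
    dist (ev f (A^[n] x)) (ev ((fun g => S (T g))^[n] f) x) ≤
      CS * CK * (∑ i ∈ Finset.range n, CK ^ i) * ‖f‖ := by
  have hstep (g : H) (y : X) : dist (ev g (A y)) (ev (S (T g)) y) ≤ CS * CK * ‖g‖ :=
    calc dist (ev g (A y)) (ev (S (T g)) y)
        = dist (ev (T g) y) (ev (S (T g)) y) := by rw [hT]
      _ ≤ CS * ‖T g‖ := hS (T g) y
      _ ≤ CS * (CK * ‖g‖) := mul_le_mul_of_nonneg_left (hTnorm g) hCS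
      _ = CS * CK * ‖g‖ := (mul_assoc _ _ _).symm
  exact dist_iterate_le_geom_sum_mul_norm (mul_nonneg hCS hCK) hCK hstep
    (fun g => (hSnorm (T g)).trans (hTnorm g)) n f x

theorem kEDMD_multistep_uniform_error_bound_with_projection_general
    (hT : ∀ f x, ev (T f) x = ev f (A x))
    (hSidem : ∀ f, S (S f) = S f) (hSnorm : ∀ f, ‖S f‖ ≤ ‖f‖) (hCS : 0 ≤ CS)
    (hS : ∀ g x, dist (ev g x) (ev (S g) x) ≤ CS * ‖g‖) (hCK : 0 ≤ CK)
    (hTnorm : ∀ f, ‖T f‖ ≤ CK * ‖f‖) (n : ℕ) (f : H) (x : X) :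
    dist (ev f (A^[n] x)) (ev ((fun g => S (T (S g)))^[n] f) x) ≤
      CS * (∑ i ∈ Finset.range (n + 1), CK ^ i) * ‖f‖ := by
  cases n with
  | zero => simpa using dist_nonneg.trans (hS f x)
  | succ n =>
    rw [iterate_succ_sandwich_of_idempotent T hSidem]
    calc dist (ev f (A^[n + 1] x)) (ev ((fun g => S (T g))^[n + 1] (S f)) x)
        ≤ dist (ev f (A^[n + 1] x)) (ev (S f) (A^[n + 1] x))
          + dist (ev (S f) (A^[n + 1] x)) (ev ((fun g => S (T g))^[n + 1] (S f)) x) :=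
          dist_triangle _ _ _
      _ ≤ CS * ‖f‖ + CS * CK * (∑ i ∈ Finset.range (n + 1), CK ^ i) * ‖S f‖ :=
          add_le_add (hS f _)
            (dist_iterate_comp_le_geom_sum_mul_norm hT hSnorm hCS hS hCK hTnorm (n + 1) (S f) x)
      _ ≤ CS * ‖f‖ + CS * CK * (∑ i ∈ Finset.range (n + 1), CK ^ i) * ‖f‖ := by
          gcongr
          exact hSnorm f
      _ = CS * (∑ i ∈ Finset.range (n + 1 + 1), CK ^ i) * ‖f‖ := by
          rw [geom_sum_succ (n := n + 1)]
          ring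

end KoopmanIterates

/-- multi-step uniform error bound for the iterates of the approximant
`K̂_A^𝒳 = S_𝒳 ∘ K_A ∘ S_𝒳`:
`sup_x |f(A^{∘n}(x)) − ((K̂_A^𝒳)^n f)(x)| ≤ C_S (∑_{i=0}^n C_K^i) ‖f‖`.
Here `T : N(X) → N(X)` is the Koopman operator, i.e. `ev (T f) = (ev f) ∘ A`
(its totality encodes the invariance `f ∘ A ∈ N(X)` for all `f ∈ N(X)`). -/
theorem kEDMD_multistep_uniform_error_bound_with_projection
    {X H : Type*} [NormedAddCommGroup H] [InnerProductSpace ℝ H] [CompleteSpace H]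
    (k : X → X → ℝ) (ev : H →ₗ[ℝ] (X → ℝ)) (Φ : X → H)
    (hN : IsNativeSpace k ev Φ) (hk : IsStrictPosDefKernel k)
    -- the kernel is bounded
    (hkb : ∃ C, ∀ x x', |k x x'| ≤ C)
    (A : X → X)
    -- the Koopman operator on the native space
    (T : H → H) (hT : ∀ (f : H) (x : X), ev (T f) x = ev f (A x))
    {N : ℕ} (𝒳 : Fin N → X) (h𝒳 : Function.Injective 𝒳)
    (V : Submodule ℝ H) (hV : V = Submodule.span ℝ (Set.range fun i => Φ (𝒳 i)))
    -- `S` is the orthogonal projection onto `V`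
    (S : H → H) (hSmem : ∀ f, S f ∈ V)
    (hSorth : ∀ f, ∀ v ∈ V, ⟪f - S f, v⟫ = (0 : ℝ))
    (CS : ℝ) (hCS : 0 ≤ CS)
    (hCSbound : ∀ (g : H) (x : X), |ev g x - ev (S g) x| ≤ CS * ‖g‖)
    (CK : ℝ) (hCK : 0 ≤ CK)
    (hCKbound : ∀ f : H, ‖T f‖ ≤ CK * ‖f‖) :
    ∀ n : ℕ, 1 ≤ n → ∀ (f : H) (x : X),
      |ev f (A^[n] x) - ev ((fun g => S (T (S g)))^[n] f) x| ≤
        CS * (∑ i ∈ Finset.range (n + 1), CK ^ i) * ‖f‖ := by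
  obtain ⟨_, rfl⟩ := exists_eq_starProjection_of_mem_of_inner_eq_zero hSmem hSorth
  exact fun n _ => kEDMD_multistep_uniform_error_bound_with_projection_general hT
    (fun f => Submodule.starProjection_eq_self_iff.2 (hSmem f)) V.norm_starProjection_apply_le
    hCS hCSbound hCK hCKbound n
end

section
/- Let Ω_X and Ω_Y be open subsets of ℝ^d, let A : Ω_X → Ω_Y be a C¹-diffeomorphism with inf_{x ∈ Ω_X} |det DA(x)| > 0, and set c₀ := sup_{x ∈ Ω_X} |det DA(x)|^{-1} and M := sup_{x ∈ Ω_X} ‖DA(x)‖_F² / |det DA(x)|, both assumed finite. Then for every continuously differentiable f : Ω_Y → ℝ with f and ∇f square-integrable on Ω_Y, both f ∘ A and ∇(f ∘ A) are square-integrable on Ω_X and ∫_{Ω_X} |f(A(x))|² dx + ∫_{Ω_X} ‖∇(f ∘ A)(x)‖² dx ≤ max{c₀, M} · ( ∫_{Ω_Y} |f(y)|² dy + ∫_{Ω_Y} ‖∇f(y)‖² dy ); i.e. the composition operator f ↦ f∘A is bounded with respect to the H¹-type norm with constant max{c₀, M}^{1/2}. -/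
open MeasureTheory

/-- The squared Frobenius norm of a continuous linear map on `ℝ^d` (the sum of the squares
of the entries of its matrix in the standard basis). -/
noncomputable def frobeniusNormSq {d : ℕ}
    (L : EuclideanSpace ℝ (Fin d) →L[ℝ] EuclideanSpace ℝ (Fin d)) : ℝ :=
  ∑ i, ∑ j, (L (EuclideanSpace.single j 1) i) ^ 2

/-!
The change of variables `y = A x` turns the integral of `g` over the image of `A` into that of
`|det DA| * (g ∘ A)`. Hence `h ≤ K * |det DA| * (g ∘ A)` implies `∫ h ≤ K * ∫ g`. For
`h = |f ∘ A|²` one may take `K = c₀`, because `1 ≤ c₀ * |det DA|`. For `h = ‖D(f ∘ A)‖²` the chain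
rule gives the factor `‖DA‖²`; the operator norm is at most the Frobenius norm, so
`‖DA‖² ≤ M * |det DA|` and one may take `K = M`.
-/

theorem sq_opNorm_le_sum_sq_norm_orthonormalBasis {𝕜 ι E F : Type*} [RCLike 𝕜] [Fintype ι]
    [NormedAddCommGroup E] [InnerProductSpace 𝕜 E] [SeminormedAddCommGroup F] [NormedSpace 𝕜 F]
    (b : OrthonormalBasis ι 𝕜 E) (L : E →L[𝕜] F) :
    ‖L‖ ^ 2 ≤ ∑ i, ‖L (b i)‖ ^ 2 := by
  refine Real.le_sqrt (norm_nonneg L) (by positivity) |>.mp ?_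
  refine L.opNorm_le_bound (Real.sqrt_nonneg _) fun x => ?_
  calc ‖L x‖ = ‖∑ i, b.repr x i • L (b i)‖ := by
        conv_lhs => rw [← b.sum_repr x, map_sum]
        simp only [map_smul]
    _ ≤ ∑ i, ‖L (b i)‖ * ‖b.repr x i‖ :=
        norm_sum_le_of_le _ fun i _ => (norm_smul_le _ _).trans_eq (mul_comm _ _)
    _ ≤ √(∑ i, ‖L (b i)‖ ^ 2) * √(∑ i, ‖b.repr x i‖ ^ 2) := Real.sum_mul_le_sqrt_mul_sqrt _ _ _
    _ = √(∑ i, ‖L (b i)‖ ^ 2) * ‖x‖ := by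
        rw [← EuclideanSpace.norm_eq, LinearIsometryEquiv.norm_map]

theorem frobeniusNormSq_eq_sum_sq_norm {d : ℕ}
    (L : EuclideanSpace ℝ (Fin d) →L[ℝ] EuclideanSpace ℝ (Fin d)) :
    frobeniusNormSq L = ∑ j, ‖L (EuclideanSpace.single j 1)‖ ^ 2 := by
  simp only [frobeniusNormSq, EuclideanSpace.real_norm_sq_eq]
  exact Finset.sum_comm

theorem sq_opNorm_le_frobeniusNormSq {d : ℕ}
    (L : EuclideanSpace ℝ (Fin d) →L[ℝ] EuclideanSpace ℝ (Fin d)) :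
    ‖L‖ ^ 2 ≤ frobeniusNormSq L := by
  simpa only [frobeniusNormSq_eq_sum_sq_norm, EuclideanSpace.basisFun_apply] using
    sq_opNorm_le_sum_sq_norm_orthonormalBasis (EuclideanSpace.basisFun (Fin d) ℝ) L

theorem rpow_norm_fderiv_comp_le {𝕜 E F G : Type*} [NontriviallyNormedField 𝕜]
    [NormedAddCommGroup E] [NormedSpace 𝕜 E] [NormedAddCommGroup F] [NormedSpace 𝕜 F]
    [NormedAddCommGroup G] [NormedSpace 𝕜 G] {f : F → G} {A : E → F} {x : E} {p : ℝ} (hp : 0 ≤ p)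
    (hf : DifferentiableAt 𝕜 f (A x)) (hA : DifferentiableAt 𝕜 A x) :
    ‖fderiv 𝕜 (f ∘ A) x‖ ^ p ≤ ‖fderiv 𝕜 A x‖ ^ p * ‖fderiv 𝕜 f (A x)‖ ^ p := by
  rw [fderiv_comp x hf hA, ← Real.mul_rpow (norm_nonneg _) (norm_nonneg _), mul_comm]
  gcongr
  exact ContinuousLinearMap.opNorm_comp_le _ _

section ChangeOfVariables

variable {E F : Type*} [NormedAddCommGroup E] [NormedSpace ℝ E] [FiniteDimensional ℝ E]
  [MeasurableSpace E] [BorelSpace E] {μ : Measure E} [μ.IsAddHaarMeasure]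
  [NormedAddCommGroup F] [NormedSpace ℝ F] {A : E → E} {s : Set E}

theorem integrableOn_and_setIntegral_le_of_le_abs_det_fderiv_mul {A' : E → E →L[ℝ] E}
    {g h : E → ℝ} {K : ℝ} (hs : MeasurableSet s)
    (hA' : ∀ x ∈ s, HasFDerivWithinAt A (A' x) s x) (hinj : s.InjOn A)
    (hg : IntegrableOn g (A '' s) μ) (hh : AEStronglyMeasurable h (μ.restrict s))
    (hh_nonneg : ∀ x ∈ s, 0 ≤ h x) (hle : ∀ x ∈ s, h x ≤ K * (|(A' x).det| * g (A x))) :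
    IntegrableOn h s μ ∧ ∫ x in s, h x ∂μ ≤ K * ∫ y in A '' s, g y ∂μ := by
  have hmajorant : IntegrableOn (fun x => K * (|(A' x).det| * g (A x))) s μ :=
    ((integrableOn_image_iff_integrableOn_abs_det_fderiv_smul μ hs hA' hinj g).mp hg).const_mul K
  have hint : IntegrableOn h s μ := by
    refine hmajorant.mono' hh ?_
    filter_upwards [ae_restrict_mem hs] with x hx
    exact (Real.norm_of_nonneg (hh_nonneg x hx)).trans_le (hle x hx)
  refine ⟨hint, ?_⟩
  calc ∫ x in s, h x ∂μ ≤ ∫ x in s, K * (|(A' x).det| * g (A x)) ∂μ :=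
        setIntegral_mono_on hint hmajorant hs hle
    _ = K * ∫ y in A '' s, g y ∂μ := by
        rw [integral_const_mul, integral_image_eq_integral_abs_det_fderiv_smul μ hs hA' hinj g]
        simp only [smul_eq_mul]

theorem integrableOn_comp_and_setIntegral_comp_le {A' : E → E →L[ℝ] E} {g : E → ℝ} {K : ℝ}
    (hs : MeasurableSet s) (hA' : ∀ x ∈ s, HasFDerivWithinAt A (A' x) s x) (hinj : s.InjOn A)
    (hdet : ∀ x ∈ s, (A' x).det ≠ 0) (hK : ∀ x ∈ s, |(A' x).det|⁻¹ ≤ K)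
    (hg : IntegrableOn g (A '' s) μ) (hg_nonneg : ∀ y ∈ A '' s, 0 ≤ g y)
    (hgA : AEStronglyMeasurable (fun x => g (A x)) (μ.restrict s)) :
    IntegrableOn (fun x => g (A x)) s μ ∧
      ∫ x in s, g (A x) ∂μ ≤ K * ∫ y in A '' s, g y ∂μ := by
  have hgA_nonneg : ∀ x ∈ s, 0 ≤ g (A x) := fun x hx => hg_nonneg _ (Set.mem_image_of_mem A hx)
  refine integrableOn_and_setIntegral_le_of_le_abs_det_fderiv_mul hs hA' hinj hg hgA hgA_nonneg
    fun x hx => ?_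
  have hone_le : 1 ≤ K * |(A' x).det| :=
    (inv_le_iff_one_le_mul₀ (abs_pos.mpr (hdet x hx))).mp (hK x hx)
  rw [← mul_assoc]
  exact le_mul_of_one_le_left (hgA_nonneg x hx) hone_le

theorem integrableOn_and_setIntegral_rpow_norm_fderiv_comp_le [CompleteSpace F] {f : E → F}
    {p K : ℝ} (hp : 0 ≤ p) (hs : IsOpen s) (hA : DifferentiableOn ℝ A s) (hinj : s.InjOn A)
    (hdet : ∀ x ∈ s, (fderiv ℝ A x).det ≠ 0)
    (hK : ∀ x ∈ s, ‖fderiv ℝ A x‖ ^ p / |(fderiv ℝ A x).det| ≤ K)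
    (hf : ∀ y ∈ A '' s, DifferentiableAt ℝ f y)
    (hgrad : IntegrableOn (fun y => ‖fderiv ℝ f y‖ ^ p) (A '' s) μ) :
    IntegrableOn (fun x => ‖fderiv ℝ (f ∘ A) x‖ ^ p) s μ ∧
      ∫ x in s, ‖fderiv ℝ (f ∘ A) x‖ ^ p ∂μ ≤ K * ∫ y in A '' s, ‖fderiv ℝ f y‖ ^ p ∂μ := by
  have hA_at : ∀ x ∈ s, DifferentiableAt ℝ A x := fun x hx => hA.differentiableAt (hs.mem_nhds hx)
  refine integrableOn_and_setIntegral_le_of_le_abs_det_fderiv_mul hs.measurableSet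
    (fun x hx => (hA_at x hx).hasFDerivAt.hasFDerivWithinAt) hinj hgrad
    ((measurable_fderiv ℝ (f ∘ A)).norm.pow_const p).aestronglyMeasurable
    (fun x _ => by positivity) fun x hx => ?_
  calc ‖fderiv ℝ (f ∘ A) x‖ ^ p ≤ ‖fderiv ℝ A x‖ ^ p * ‖fderiv ℝ f (A x)‖ ^ p :=
        rpow_norm_fderiv_comp_le hp (hf _ (Set.mem_image_of_mem A hx)) (hA_at x hx)
    _ ≤ K * |(fderiv ℝ A x).det| * ‖fderiv ℝ f (A x)‖ ^ p := by
        gcongr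
        exact (div_le_iff₀ (abs_pos.mpr (hdet x hx))).mp (hK x hx)
    _ = K * (|(fderiv ℝ A x).det| * ‖fderiv ℝ f (A x)‖ ^ p) := mul_assoc _ _ _

theorem koopman_H1_bound_general [CompleteSpace F] {f : E → F} {p c₀ M : ℝ} (hp : 0 ≤ p)
    (hs : IsOpen s) (hA : DifferentiableOn ℝ A s) (hinj : s.InjOn A)
    (hdet : ∀ x ∈ s, (fderiv ℝ A x).det ≠ 0)
    (hc₀ : ∀ x ∈ s, |(fderiv ℝ A x).det|⁻¹ ≤ c₀)
    (hM : ∀ x ∈ s, ‖fderiv ℝ A x‖ ^ p / |(fderiv ℝ A x).det| ≤ M)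
    (hf : ∀ y ∈ A '' s, DifferentiableAt ℝ f y)
    (hfp : IntegrableOn (fun y => ‖f y‖ ^ p) (A '' s) μ)
    (hgrad : IntegrableOn (fun y => ‖fderiv ℝ f y‖ ^ p) (A '' s) μ) :
    IntegrableOn (fun x => ‖f (A x)‖ ^ p) s μ ∧
    IntegrableOn (fun x => ‖fderiv ℝ (f ∘ A) x‖ ^ p) s μ ∧
    (∫ x in s, ‖f (A x)‖ ^ p ∂μ) + ∫ x in s, ‖fderiv ℝ (f ∘ A) x‖ ^ p ∂μ ≤
      max c₀ M * ((∫ y in A '' s, ‖f y‖ ^ p ∂μ) + ∫ y in A '' s, ‖fderiv ℝ f y‖ ^ p ∂μ) := by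
  have hfA : ContinuousOn (fun x => f (A x)) s := fun x hx =>
    (hf _ (Set.mem_image_of_mem A hx)).continuousAt.comp_continuousWithinAt (hA.continuousOn x hx)
  have hfA_meas : AEStronglyMeasurable (fun x => ‖f (A x)‖ ^ p) (μ.restrict s) :=
    (hfA.norm.rpow_const fun _ _ => Or.inr hp).aestronglyMeasurable hs.measurableSet
  obtain ⟨hfA_int, hfA_le⟩ := integrableOn_comp_and_setIntegral_comp_le hs.measurableSet
    (fun x hx => (hA.differentiableAt (hs.mem_nhds hx)).hasFDerivAt.hasFDerivWithinAt) hinj hdet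
    (fun x hx => (hc₀ x hx).trans (le_max_left c₀ M)) hfp (fun _ _ => by positivity) hfA_meas
  obtain ⟨hgradA_int, hgradA_le⟩ := integrableOn_and_setIntegral_rpow_norm_fderiv_comp_le hp hs hA
    hinj hdet (fun x hx => (hM x hx).trans (le_max_right c₀ M)) hf hgrad
  exact ⟨hfA_int, hgradA_int, (add_le_add hfA_le hgradA_le).trans_eq (mul_add _ _ _).symm⟩

end ChangeOfVariables

/-- for a C¹-diffeomorphism `A : Ω_X → Ω_Y` with
`|det DA(x)|⁻¹ ≤ c₀` and `‖DA(x)‖_F² / |det DA(x)| ≤ M` on `Ω_X`, and any C¹ function `f`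
on `Ω_Y` with `f` and `∇f` square-integrable, both `f ∘ A` and `∇(f ∘ A)` are
square-integrable on `Ω_X` and
`∫_{Ω_X} |f∘A|² + ∫_{Ω_X} ‖∇(f∘A)‖² ≤ max{c₀, M} (∫_{Ω_Y} |f|² + ∫_{Ω_Y} ‖∇f‖²)`,
i.e. the composition operator is `H¹`-bounded with constant `max{c₀, M}^{1/2}`. -/
theorem koopman_H1_bound
    {d : ℕ} (ΩX ΩY : Set (EuclideanSpace ℝ (Fin d)))
    (hΩX : IsOpen ΩX) (hΩY : IsOpen ΩY)
    (A B : EuclideanSpace ℝ (Fin d) → EuclideanSpace ℝ (Fin d))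
    -- `A : Ω_X → Ω_Y` is a C¹-diffeomorphism with inverse `B`
    (hA : ContDiffOn ℝ 1 A ΩX) (hB : ContDiffOn ℝ 1 B ΩY)
    (hAmaps : Set.MapsTo A ΩX ΩY) (hBmaps : Set.MapsTo B ΩY ΩX)
    (hBA : ∀ x ∈ ΩX, B (A x) = x) (hAB : ∀ y ∈ ΩY, A (B y) = y)
    -- `inf_{x ∈ Ω_X} |det DA(x)| > 0`
    (c : ℝ) (hc : 0 < c) (hdet : ∀ x ∈ ΩX, c ≤ |(fderiv ℝ A x).det|)
    -- `c₀` bounds `|det DA(x)|⁻¹` and `M` bounds `‖DA(x)‖_F² / |det DA(x)|` on `Ω_X`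
    (c₀ M : ℝ)
    (hc₀ : ∀ x ∈ ΩX, |(fderiv ℝ A x).det|⁻¹ ≤ c₀)
    (hM : ∀ x ∈ ΩX, frobeniusNormSq (fderiv ℝ A x) / |(fderiv ℝ A x).det| ≤ M)
    -- `f` is C¹ on `Ω_Y`, square-integrable with square-integrable gradient
    (f : EuclideanSpace ℝ (Fin d) → ℝ)
    (hf : ContDiffOn ℝ 1 f ΩY)
    (hf2 : IntegrableOn (fun y => f y ^ 2) ΩY)
    (hgrad : IntegrableOn (fun y => ‖fderiv ℝ f y‖ ^ 2) ΩY) :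
    IntegrableOn (fun x => f (A x) ^ 2) ΩX ∧
    IntegrableOn (fun x => ‖fderiv ℝ (f ∘ A) x‖ ^ 2) ΩX ∧
    (∫ x in ΩX, f (A x) ^ 2) + ∫ x in ΩX, ‖fderiv ℝ (f ∘ A) x‖ ^ 2 ≤
      max c₀ M * ((∫ y in ΩY, f y ^ 2) + ∫ y in ΩY, ‖fderiv ℝ f y‖ ^ 2) := by
  have himage : A '' ΩX = ΩY := (Set.InvOn.bijOn ⟨hBA, hAB⟩ hAmaps hBmaps).image_eq
  have hdet_ne : ∀ x ∈ ΩX, (fderiv ℝ A x).det ≠ 0 := fun x hx =>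
    abs_pos.mp (hc.trans_le (hdet x hx))
  have hopNorm : ∀ x ∈ ΩX, ‖fderiv ℝ A x‖ ^ (2 : ℝ) / |(fderiv ℝ A x).det| ≤ M := fun x hx => by
    rw [Real.rpow_two]
    exact (div_le_div_of_nonneg_right (sq_opNorm_le_frobeniusNormSq _) (abs_nonneg _)).trans
      (hM x hx)
  have hf_at : ∀ y ∈ ΩY, DifferentiableAt ℝ f y := fun y hy =>
    (hf.differentiableOn one_ne_zero).differentiableAt (hΩY.mem_nhds hy)
  subst himage
  simpa only [Real.rpow_two, Real.norm_eq_abs, sq_abs] using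
    koopman_H1_bound_general zero_le_two hΩX (hA.differentiableOn one_ne_zero)
      (Set.LeftInvOn.injOn hBA) hdet_ne hc₀ hopNorm hf_at
      (by simpa only [Real.rpow_two, Real.norm_eq_abs, sq_abs] using hf2)
      (by simpa only [Real.rpow_two] using hgrad)
end
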